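/- Let H be a 2-edge-connected undirected graph with a DFS tree T rooted at r, and let u and v be vertices different from r such that v is an ancestor of u. Then {(u,p(u)),(v,p(v))} is a cut-pair of H if and only if v is a proper ancestor of u, M(u) = M(v), and high(u) is a proper ancestor of v. -/

import Mathlib

/-- A DFS tree of the graph `H`, rooted at `r`, given by a parent function:
it is a spanning tree (every vertex reaches the root by iterating the parent
function, and each non-root vertex is adjacent to its parent), and every edge
of `H` joins a vertex to one of its ancestors. -/
structure DFSTree {V : Type*} (H : SimpleGraph V) (r : V) where
  par : V → V
  par_root : par r = r
  reaches_root : ∀ v : V, ∃ n : ℕ, par^[n] v = r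
  par_adj : ∀ v : V, v ≠ r → H.Adj v (par v)
  edge_anc : ∀ x y : V, H.Adj x y → (∃ n : ℕ, par^[n] x = y) ∨ (∃ n : ℕ, par^[n] y = x)

namespace DFSTree

variable {V : Type*} {H : SimpleGraph V} {r : V} (T : DFSTree H r)

/-- `a` is an ancestor of `b` (every vertex is an ancestor of itself). -/
def Anc (a b : V) : Prop := ∃ n : ℕ, T.par^[n] b = a

/-- `a` is a proper ancestor of `b`. -/
def PAnc (a b : V) : Prop := T.Anc a b ∧ a ≠ b

/-- `(x,y)` is a back-edge: an edge of `H` from `x` to an ancestor `y` of `x`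
which is not the tree edge from `x` to its parent. -/
def BackEdge (x y : V) : Prop := H.Adj x y ∧ T.Anc y x ∧ T.par x ≠ y

/-- The set of descendants of `v` joined by a back-edge to a proper ancestor of `v`. -/
def MSet (v : V) : Set V := {x | T.Anc v x ∧ ∃ y, T.PAnc y v ∧ T.BackEdge x y}

/-- `m = M(v)`: `m` is the nearest common ancestor of all descendants of `v`
joined by a back-edge to a proper ancestor of `v`. -/
def IsM (v m : V) : Prop :=
  (∀ x ∈ T.MSet v, T.Anc m x) ∧ ∀ m' : V, (∀ x ∈ T.MSet v, T.Anc m' x) → T.Anc m' m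

/-- The set of descendants of `v` joined by a back-edge to a proper ancestor of `p(v)`. -/
def MpSet (v : V) : Set V := {x | T.Anc v x ∧ ∃ y, T.PAnc y (T.par v) ∧ T.BackEdge x y}

/-- `m = M_p(v)`: `m` is the nearest common ancestor of all descendants of `v`
joined by a back-edge to a proper ancestor of `p(v)`. -/
def IsMp (v m : V) : Prop :=
  (∀ x ∈ T.MpSet v, T.Anc m x) ∧ ∀ m' : V, (∀ x ∈ T.MpSet v, T.Anc m' x) → T.Anc m' m

/-- `h = high(v)`: `h` is the deepest proper ancestor of `v` joined by a
back-edge to a descendant of `v`. -/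
def IsHigh (v h : V) : Prop :=
  T.PAnc h v ∧ (∃ x, T.Anc v x ∧ T.BackEdge x h) ∧
    ∀ h' : V, T.PAnc h' v → (∃ x, T.Anc v x ∧ T.BackEdge x h') → T.Anc h' h

/-- `h = high_p(v)`: `h` is the deepest proper ancestor of `p(v)` joined by a
back-edge to a descendant of `v`. -/
def IsHighP (v h : V) : Prop :=
  T.PAnc h (T.par v) ∧ (∃ x, T.Anc v x ∧ T.BackEdge x h) ∧
    ∀ h' : V, T.PAnc h' (T.par v) → (∃ x, T.Anc v x ∧ T.BackEdge x h') → T.Anc h' h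

/-- `l = low(v)`: `l` is the proper ancestor of `v` nearest to the root joined
by a back-edge to a descendant of `v`. -/
def IsLow (v l : V) : Prop :=
  T.PAnc l v ∧ (∃ x, T.Anc v x ∧ T.BackEdge x l) ∧
    ∀ l' : V, T.PAnc l' v → (∃ x, T.Anc v x ∧ T.BackEdge x l') → T.Anc l l'

end DFSTree

/-- `{v, e}` is a vertex-edge cut-pair of `H`: `e` is an edge of `H` and deleting
both `v` (with its incident edges) and `e` disconnects `H`. -/
def VECutPair {V : Type*} (H : SimpleGraph V) (v : V) (e : Sym2 V) : Prop :=
  e ∈ H.edgeSet ∧ ¬ ((H.deleteEdges {e}).induce {u | u ≠ v}).Connected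

/-- `{e, e'}` is a cut-pair of `H`: `e` and `e'` are distinct edges of `H` whose
deletion disconnects `H`. -/
def ECutPair {V : Type*} (H : SimpleGraph V) (e e' : Sym2 V) : Prop :=
  e ∈ H.edgeSet ∧ e' ∈ H.edgeSet ∧ e ≠ e' ∧ ¬ (H.deleteEdges {e, e'}).Connected

/-- An undirected graph is 2-edge-connected if it is connected and has no bridge. -/
def TwoEdgeConnected {W : Type*} (G : SimpleGraph W) : Prop :=
  G.Connected ∧ ∀ e ∈ G.edgeSet, ¬ G.IsBridge e

/-- An undirected graph is 2-vertex-connected if it has at least three vertices,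
is connected, and deleting any single vertex leaves it connected. -/
def TwoVertexConnected {W : Type*} (G : SimpleGraph W) : Prop :=
  3 ≤ Nat.card W ∧ G.Connected ∧ ∀ v : W, (G.induce {u | u ≠ v}).Connected


namespace DFSTree
variable {V : Type*} {H : SimpleGraph V} {r : V} (T : DFSTree H r)

lemma anc_refl (a : V) : T.Anc a a := ⟨0, rfl⟩

lemma anc_par (a : V) : T.Anc (T.par a) a := ⟨1, rfl⟩

lemma anc_trans {a b c : V} (h1 : T.Anc a b) (h2 : T.Anc b c) : T.Anc a c := by
  obtain ⟨n, rfl⟩ := h1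
  obtain ⟨m, rfl⟩ := h2
  exact ⟨n + m, Function.iterate_add_apply _ _ _ _⟩

lemma par_iter_root (n : ℕ) : T.par^[n] r = r := Function.iterate_fixed T.par_root n

lemma anc_root (a : V) : T.Anc r a := T.reaches_root a

lemma eq_root_of_anc {a : V} (h : T.Anc a r) : a = r := by
  obtain ⟨n, rfl⟩ := h
  exact T.par_iter_root n

lemma anc_antisymm {a b : V} (h1 : T.Anc a b) (h2 : T.Anc b a) : a = b := by
  obtain ⟨n, hn⟩ := h1
  obtain ⟨m, hm⟩ := h2
  rcases Nat.eq_zero_or_pos n with rfl | hpos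
  · exact hn.symm
  have hfix : T.par^[m + n] b = b := by
    rw [Function.iterate_add_apply, hn, hm]
  obtain ⟨k, hk⟩ := T.reaches_root b
  have h3 : T.par^[(m + n) * k] b = b := by
    rw [Function.iterate_mul]
    exact Function.iterate_fixed hfix k
  have h4 : (m + n) * k = ((m + n) * k - k) + k := by
    have : k ≤ (m + n) * k := Nat.le_mul_of_pos_left k (by omega)
    omega
  rw [h4, Function.iterate_add_apply, hk, T.par_iter_root] at h3
  subst h3
  rw [← hn, T.par_iter_root]

lemma anc_total {a b x : V} (h1 : T.Anc a x) (h2 : T.Anc b x) : T.Anc a b ∨ T.Anc b a := by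
  obtain ⟨n, rfl⟩ := h1
  obtain ⟨m, rfl⟩ := h2
  rcases le_total n m with h | h
  · right
    exact ⟨m - n, by rw [← Function.iterate_add_apply, Nat.sub_add_cancel h]⟩
  · left
    exact ⟨n - m, by rw [← Function.iterate_add_apply, Nat.sub_add_cancel h]⟩

lemma anc_par_of_ne {a x : V} (h : T.Anc a x) (hne : a ≠ x) : T.Anc a (T.par x) := by
  obtain ⟨n, rfl⟩ := h
  cases n with
  | zero => exact absurd rfl hne
  | succ n => exact ⟨n, rfl⟩

/-- Vertices of a parent-closed (up to `t`) region reach `t`. -/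
lemma reach_of_region (G : SimpleGraph V) (S : Set V) (t : V)
    (hS : ∀ x ∈ S, T.Anc t x)
    (hstep : ∀ x ∈ S, x ≠ t → T.par x ∈ S ∧ G.Adj x (T.par x)) (x : V) (hx : x ∈ S) :
    G.Reachable x t := by
  obtain ⟨n, hn⟩ := hS x hx
  induction n generalizing x with
  | zero => rw [← hn]; rfl
  | succ n ih =>
    by_cases hxt : x = t
    · rw [hxt]
    · obtain ⟨h1, h2⟩ := hstep x hx hxt
      exact h2.reachable.trans (ih _ h1 hn)

lemma par_edge_ne {x w : V} (hx : x ≠ r) (hw : w ≠ r) (hne : x ≠ w) :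
    s(x, T.par x) ≠ s(w, T.par w) := by
  intro h
  rw [Sym2.eq_iff] at h
  rcases h with h | ⟨h1, h2⟩
  · exact hne h.1
  · exact hne (T.anc_antisymm (h1 ▸ T.anc_par w) (h2 ▸ T.anc_par x))

lemma back_ne {x y w : V} (h : T.BackEdge x y) : s(x, y) ≠ s(w, T.par w) := by
  intro he
  rw [Sym2.eq_iff] at he
  rcases he with ⟨rfl, h2⟩ | ⟨h1, rfl⟩
  · exact h.2.2 h2.symm
  · have : x = y := T.anc_antisymm (h1 ▸ T.anc_par y) h.2.1
    exact h.1.ne this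

end DFSTree

lemma exists_cross {V : Type*} {G : SimpleGraph V} {a b : V} (S : Set V) (h : G.Reachable a b)
    (ha : a ∈ S) (hb : b ∉ S) : ∃ x y, G.Adj x y ∧ x ∈ S ∧ y ∉ S := by
  obtain ⟨p⟩ := h
  obtain ⟨d, -, h1, h2⟩ := p.exists_boundary_dart S ha hb
  exact ⟨d.fst, d.snd, d.adj, h1, h2⟩

theorem stmt_17 {V : Type*} [Fintype V] (H : SimpleGraph V) (r : V)
    (T : DFSTree H r) (hH : TwoEdgeConnected H) (u v mu mv hgu : V)
    (hur : u ≠ r) (hvr : v ≠ r) (hanc : T.Anc v u)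
    (hmu : T.IsM u mu) (hmv : T.IsM v mv) (hhgu : T.IsHigh u hgu) :
    ECutPair H s(u, T.par u) s(v, T.par v) ↔
      (T.PAnc v u ∧ mu = mv ∧ T.PAnc hgu v) := by
  constructor
  · rintro ⟨-, -, hne, hdis⟩
    have huv : v ≠ u := by
      rintro rfl
      exact hne rfl
    set G := H.deleteEdges {s(u, T.par u), s(v, T.par v)} with hG
    have hback : ∀ x y, T.BackEdge x y → G.Adj x y := by
      intro x y h
      rw [hG, SimpleGraph.deleteEdges_adj]
      refine ⟨h.1, ?_⟩
      rintro (h' | h')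
      · exact T.back_ne h h'
      · exact T.back_ne h h'
    have hpar : ∀ x, x ≠ r → x ≠ u → x ≠ v → G.Adj x (T.par x) := by
      intro x h1 h2 h3
      rw [hG, SimpleGraph.deleteEdges_adj]
      refine ⟨T.par_adj x h1, ?_⟩
      rintro (h' | h')
      · exact T.par_edge_ne h1 hur h2 h'
      · exact T.par_edge_ne h1 hvr h3 h'
    have hA : ∀ x, ¬ T.Anc v x → G.Reachable x r := by
      intro x hx
      refine T.reach_of_region G {x | ¬ T.Anc v x} r (fun x _ => T.anc_root x) ?_ x hx
      intro x hx hxr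
      refine ⟨fun h => hx (T.anc_trans h (T.anc_par x)), hpar x hxr ?_ ?_⟩
      · rintro rfl; exact hx hanc
      · rintro rfl; exact hx (T.anc_refl _)
    have hB : ∀ x, T.Anc v x → ¬ T.Anc u x → G.Reachable x v := by
      intro x hx hx'
      refine T.reach_of_region G {x | T.Anc v x ∧ ¬ T.Anc u x} v (fun x h => h.1) ?_ x ⟨hx, hx'⟩
      rintro x ⟨h1, h2⟩ hxv
      refine ⟨⟨T.anc_par_of_ne h1 (Ne.symm hxv), fun h => h2 (T.anc_trans h (T.anc_par x))⟩,
        hpar x ?_ ?_ hxv⟩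
      · rintro rfl; exact hvr (T.eq_root_of_anc h1)
      · rintro rfl; exact h2 (T.anc_refl _)
    have hC : ∀ x, T.Anc u x → G.Reachable x u := by
      intro x hx
      refine T.reach_of_region G {x | T.Anc u x} u (fun x h => h) ?_ x hx
      rintro x h1 hxu
      refine ⟨T.anc_par_of_ne h1 (Ne.symm hxu), hpar x ?_ hxu ?_⟩
      · rintro rfl; exact hur (T.eq_root_of_anc h1)
      · rintro rfl; exact huv (T.anc_antisymm hanc h1)
    have hconn : G.Reachable u r → G.Reachable v r → False := by
      intro h1 h2
      apply hdis
      have key : ∀ x, G.Reachable x r := by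
        intro x
        by_cases hx : T.Anc v x
        · by_cases hx' : T.Anc u x
          · exact (hC x hx').trans h1
          · exact (hB x hx hx').trans h2
        · exact hA x hx
      haveI : Nonempty V := ⟨r⟩
      exact ⟨fun x y => (key x).trans (key y).symm⟩
    -- a back-edge out of D(v)
    have hvout : ∃ x y, T.Anc v x ∧ ¬ T.Anc v y ∧ G.Adj x y := by
      have hb := hH.2 s(v, T.par v) (T.par_adj v hvr)
      rw [SimpleGraph.isBridge_iff] at hb
      have hb' : (H.deleteEdges {s(v, T.par v)}).Reachable v (T.par v) := by
        by_contra hc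
        exact hb hc
      obtain ⟨x, y, hxy, hx, hy⟩ := exists_cross {x | T.Anc v x} hb' (T.anc_refl v) (by
        intro h
        exact (T.par_adj v hvr).ne (T.anc_antisymm h (T.anc_par v)))
      refine ⟨x, y, hx, hy, ?_⟩
      rw [SimpleGraph.deleteEdges_adj] at hxy
      rw [hG, SimpleGraph.deleteEdges_adj]
      refine ⟨hxy.1, ?_⟩
      rintro (h' | h')
      · rw [Sym2.eq_iff] at h'
        have := T.anc_par_of_ne hanc huv
        rcases h' with ⟨h3, h4⟩ | ⟨h3, h4⟩
        · exact hy (h4 ▸ this)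
        · exact hy (h4 ▸ hanc)
      · exact hxy.2 h'
    have hCB : ∀ x y, T.Anc u x → T.Anc v y → ¬ T.Anc u y → ¬ T.BackEdge x y := by
      intro x y h1 h2 h3 hb
      have huv' : G.Reachable u v :=
        ((hC x h1).symm.trans (hback x y hb).reachable).trans (hB y h2 h3)
      obtain ⟨a, b, ha, hb, hab⟩ := hvout
      have hav : G.Reachable a v := by
        by_cases h : T.Anc u a
        · exact (hC a h).trans huv'
        · exact hB a ha h
      have hvr' : G.Reachable v r := (hav.symm.trans hab.reachable).trans (hA b hb)
      exact hconn (huv'.trans hvr') hvr'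
    have hhv : T.PAnc hgu v := by
      obtain ⟨⟨h1, h2⟩, ⟨x, hx, hxb⟩, -⟩ := hhgu
      have hnu : ¬ T.Anc u hgu := fun h => h2 (T.anc_antisymm h1 h)
      have hnv : ¬ T.Anc v hgu := fun h => hCB x hgu hx h hnu hxb
      refine ⟨(T.anc_total h1 hanc).resolve_right hnv, ?_⟩
      rintro rfl
      exact hnv (T.anc_refl _)
    have hBA : ∀ x y, T.Anc v x → ¬ T.Anc u x → ¬ T.Anc v y → ¬ T.BackEdge x y := by
      intro x y h1 h2 h3 hb
      have hvr' : G.Reachable v r :=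
        ((hB x h1 h2).symm.trans (hback x y hb).reachable).trans (hA y h3)
      obtain ⟨-, ⟨z, hz, hzb⟩, -⟩ := hhgu
      have hnv : ¬ T.Anc v hgu := fun h => hhv.2 (T.anc_antisymm hhv.1 h)
      exact hconn (((hC z hz).symm.trans (hback z hgu hzb).reachable).trans (hA hgu hnv)) hvr'
    have hM : T.MSet u = T.MSet v := by
      ext x
      constructor
      · rintro ⟨h1, y, ⟨h2, h2'⟩, h3⟩
        have hnu : ¬ T.Anc u y := fun h => h2' (T.anc_antisymm h2 h)
        have hnv : ¬ T.Anc v y := fun h => hCB x y h1 h hnu h3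
        refine ⟨T.anc_trans hanc h1, y, ⟨(T.anc_total h2 hanc).resolve_right hnv, ?_⟩, h3⟩
        rintro rfl
        exact hnv (T.anc_refl _)
      · rintro ⟨h1, y, ⟨h2, h2'⟩, h3⟩
        have hnv : ¬ T.Anc v y := fun h => h2' (T.anc_antisymm h2 h)
        have hux : T.Anc u x := by
          by_contra h
          exact hBA x y h1 h hnv h3
        refine ⟨hux, y, ⟨T.anc_trans h2 hanc, ?_⟩, h3⟩
        rintro rfl
        exact hnv hanc
    refine ⟨⟨hanc, huv⟩, ?_, hhv⟩
    unfold DFSTree.IsM at hmu hmv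
    rw [hM] at hmu
    exact T.anc_antisymm (hmv.2 _ hmu.1) (hmu.2 _ hmv.1)
  · rintro ⟨⟨-, huv⟩, rfl, hhv⟩
    refine ⟨T.par_adj u hur, T.par_adj v hvr, T.par_edge_ne hur hvr huv.symm, ?_⟩
    intro hcon
    have hum : T.Anc u mu := hmu.2 u (fun x hx => hx.1)
    obtain ⟨x, y, hxy, ⟨hx1, hx2⟩, hy⟩ := exists_cross {x | T.Anc v x ∧ ¬ T.Anc u x}
      (hcon.preconnected v r) ⟨T.anc_refl v, fun h => huv (T.anc_antisymm hanc h)⟩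
      (fun h => hvr (T.eq_root_of_anc h.1))
    rw [SimpleGraph.deleteEdges_adj] at hxy
    obtain ⟨hadj, hnot⟩ := hxy
    by_cases hyv : T.Anc v y
    · have hyu : T.Anc u y := by
        by_contra h
        exact hy ⟨hyv, h⟩
      have hxy' : T.Anc x y := by
        rcases T.edge_anc x y hadj with h | h
        · exact absurd (T.anc_trans hyu h) hx2
        · exact h
      by_cases hp : T.par y = x
      · have : u = y := by
          by_contra hne
          exact hx2 (hp ▸ T.anc_par_of_ne hyu hne)
        subst this
        apply hnot
        left
        rw [hp]
        exact Sym2.eq_swap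
      · have hxu : T.Anc x u := (T.anc_total hxy' hyu).resolve_right hx2
        have hxh : T.Anc x hgu := by
          refine hhgu.2.2 x ⟨hxu, ?_⟩ ⟨y, hyu, hadj.symm, hxy', hp⟩
          rintro rfl
          exact hx2 (T.anc_refl _)
        exact hhv.2 (T.anc_antisymm hhv.1 (T.anc_trans hx1 hxh))
    · have hyx : T.Anc y x := by
        rcases T.edge_anc x y hadj with h | h
        · exact h
        · exact absurd (T.anc_trans hx1 h) hyv
      by_cases hp : T.par x = y
      · have : v = x := by
          by_contra hne
          exact hyv (hp ▸ T.anc_par_of_ne hx1 hne)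
        subst this
        apply hnot
        right
        rw [hp]
        rfl
      · have hmem : x ∈ T.MSet v := by
          refine ⟨hx1, y, ⟨(T.anc_total hyx hx1).resolve_right hyv, ?_⟩, hadj, hyx, hp⟩
          rintro rfl
          exact hyv (T.anc_refl _)
        exact hx2 (T.anc_trans hum (hmv.1 x hmem))
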